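/- arXiv:1809.02434 — 2 statements merged into one kernel-verified Lean document; each statement's English description precedes it below -/
import Mathlib

section
/- Let G = (V,E) be a finite simple graph, let W ⊆ V with |W| ≥ 2, and let S ⊆ W with |S| ≥ 4. Then there exists u ∈ S such that dens(W \ {u}) ≥ (1/2) · dens(W). -/
open Finset

/-- The number of edges of `G` with both endpoints in `U`. -/
noncomputable def edgeCount {V : Type*} (G : SimpleGraph V) (U : Finset V) : ℕ :=
  Set.ncard {e : Sym2 V | e ∈ G.edgeSet ∧ ∀ v ∈ e, v ∈ U}

/-- The density of the subgraph of `G` induced by `U`. -/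
noncomputable def dens {V : Type*} (G : SimpleGraph V) (U : Finset V) : ℝ :=
  (edgeCount G U : ℝ) / U.card

/-!
An edge has only two endpoints, so on average a vertex of `S` lies on at most a fraction `2 / #S`
of the edges inside `W`. Deleting a vertex of `S` that does no worse than average keeps at least
a fraction `1 - 2 / #S` of these edges, while the number of vertices does not increase.
-/

section DoubleCounting

variable {V : Type*} [DecidableEq V]

theorem card_filter_mem_sym2_le_two (S : Finset V) (e : Sym2 V) : #{u ∈ S | u ∈ e} ≤ 2 := by
  induction e with
  | _ a b =>
    have endpoints : {u ∈ S | u ∈ s(a, b)} ⊆ {a, b} := fun u hu => by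
      simpa using (mem_filter.1 hu).2
    exact (card_le_card endpoints).trans card_le_two

theorem sum_card_filter_mem_sym2_le (S : Finset V) (E : Finset (Sym2 V)) :
    ∑ u ∈ S, #{e ∈ E | u ∈ e} ≤ 2 * #E :=
  calc
    ∑ u ∈ S, #{e ∈ E | u ∈ e} = ∑ e ∈ E, #{u ∈ S | u ∈ e} :=
      sum_card_bipartiteAbove_eq_sum_card_bipartiteBelow (· ∈ ·)
    _ ≤ #E * 2 := sum_le_card_nsmul E _ 2 fun e _ => card_filter_mem_sym2_le_two S e
    _ = 2 * #E := mul_comm _ _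

theorem exists_mem_card_mul_card_filter_mem_sym2_le {S : Finset V} (hS : S.Nonempty)
    (E : Finset (Sym2 V)) : ∃ u ∈ S, #S * #{e ∈ E | u ∈ e} ≤ 2 * #E := by
  refine exists_le_of_sum_le hS ?_
  rw [← mul_sum, sum_const, smul_eq_mul]
  exact Nat.mul_le_mul_left _ (sum_card_filter_mem_sym2_le S E)

end DoubleCounting

theorem half_le_one_sub_two_div {x : ℝ} (hx : 4 ≤ x) : 1 / 2 ≤ 1 - 2 / x := by
  have : 2 / x ≤ 1 / 2 := by
    rw [div_le_div_iff₀ (by linarith) two_pos]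
    linarith
  linarith

section Density

variable {V : Type*} (G : SimpleGraph V)

theorem edgeCount_eq_card_filter_sym2 [DecidablePred (· ∈ G.edgeSet)] (U : Finset V) :
    edgeCount G U = #{e ∈ U.sym2 | e ∈ G.edgeSet} := by
  rw [edgeCount, ← Set.ncard_coe_finset]
  congr 1
  ext e
  simp [and_comm]

theorem dens_nonneg (U : Finset V) : 0 ≤ dens G U :=
  div_nonneg (Nat.cast_nonneg _) (Nat.cast_nonneg _)

variable [DecidableEq V]

theorem edgeCount_eq_card_filter_mem_add_edgeCount_erase [DecidablePred (· ∈ G.edgeSet)]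
    (W : Finset V) (u : V) :
    edgeCount G W = #{e ∈ W.sym2.filter (· ∈ G.edgeSet) | u ∈ e} + edgeCount G (W.erase u) := by
  have edges_erase : (W.erase u).sym2.filter (· ∈ G.edgeSet) =
      {e ∈ W.sym2.filter (· ∈ G.edgeSet) | u ∉ e} := by
    ext e
    simp only [mem_filter, mem_sym2_iff, mem_erase]
    grind
  rw [edgeCount_eq_card_filter_sym2, edgeCount_eq_card_filter_sym2, edges_erase,
    card_filter_add_card_filter_not]

theorem exists_mem_one_sub_two_div_card_mul_edgeCount_le (W : Finset V) {S : Finset V}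
    (hS : S.Nonempty) :
    ∃ u ∈ S, (1 - 2 / #S : ℝ) * edgeCount G W ≤ edgeCount G (W.erase u) := by
  classical
  obtain ⟨u, hu, few_edges⟩ :=
    exists_mem_card_mul_card_filter_mem_sym2_le hS (W.sym2.filter (· ∈ G.edgeSet))
  refine ⟨u, hu, ?_⟩
  rw [← edgeCount_eq_card_filter_sym2] at few_edges
  have split := edgeCount_eq_card_filter_mem_add_edgeCount_erase G W u
  set d := #{e ∈ W.sym2.filter (· ∈ G.edgeSet) | u ∈ e}
  have card_S_pos : (0 : ℝ) < #S := mod_cast hS.card_pos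
  have d_le : (d : ℝ) ≤ 2 / #S * edgeCount G W := by
    rw [div_mul_eq_mul_div, le_div_iff₀' card_S_pos]
    exact_mod_cast few_edges
  have split_real : (edgeCount G W : ℝ) = d + edgeCount G (W.erase u) := mod_cast split
  linarith

theorem stmt_12_general (W : Finset V) (hW : 2 ≤ #W) {S : Finset V} (hS : S.Nonempty) :
    ∃ u ∈ S, (1 - 2 / #S : ℝ) * dens G W ≤ dens G (W.erase u) := by
  obtain ⟨u, hu, edges_le⟩ := exists_mem_one_sub_two_div_card_mul_edgeCount_le G W hS
  have erase_pos : 0 < #(W.erase u) := by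
    have := pred_card_le_card_erase (s := W) (a := u)
    lia
  refine ⟨u, hu, ?_⟩
  calc
    (1 - 2 / #S : ℝ) * dens G W = (1 - 2 / #S : ℝ) * edgeCount G W / #W :=
      (mul_div_assoc _ _ _).symm
    _ ≤ edgeCount G (W.erase u) / #W := by gcongr
    _ ≤ edgeCount G (W.erase u) / #(W.erase u) := by
      gcongr
      exact erase_subset u W

end Density

/-- averaging consequence in the proof of Lemma 12 of the paper. -/
theorem stmt_12 {V : Type*} [Fintype V] [DecidableEq V]
    (G : SimpleGraph V) (W : Finset V) (hW : 2 ≤ W.card)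
    (S : Finset V) (hS : S ⊆ W) (hS4 : 4 ≤ S.card) :
    ∃ u ∈ S, dens G (W.erase u) ≥ (1 / 2) * dens G W := by
  obtain ⟨u, hu, h⟩ := stmt_12_general G W hW (card_pos.1 (by lia : 0 < #S))
  exact ⟨u, hu, (mul_le_mul_of_nonneg_right (half_le_one_sub_two_div (mod_cast hS4))
    (dens_nonneg G W)).trans h⟩
end

section
/- Let G = (V,E) be a finite simple graph with V nonempty and set λ = 3|V|³. Let V_1, V_2, V_3 be nonempty subsets of V with r(V_1, V_2, V_3) ≥ (|V| - 3)/2 + 18|V|³. Then V_1, V_2, V_3 are pairwise disjoint, V_1 ∪ V_2 ∪ V_3 = V, and each induced subgraph G[V_i] (1 ≤ i ≤ 3) is a clique. -/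
open Finset

/-- The distance between two finite sets used in the paper. -/
noncomputable def ddist {α : Type*} [DecidableEq α] (U Z : Finset α) : ℝ :=
  if U = Z then 0 else 2 - ((U ∩ Z).card : ℝ) ^ 2 / ((U.card : ℝ) * (Z.card : ℝ))

/-- The objective function of Top-3-Overlapping Densest Subgraphs for a triple. -/
noncomputable def rval3 {V : Type*} [DecidableEq V] (G : SimpleGraph V) (lam : ℝ)
    (W₁ W₂ W₃ : Finset V) : ℝ :=
  dens G W₁ + dens G W₂ + dens G W₃ +
    lam * (ddist W₁ W₂ + ddist W₁ W₃ + ddist W₂ W₃)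

/-!
Every nonempty set has density at most `(|U| - 1) / 2`, with equality only for cliques, and every
distance is at most `2`. Two sets that meet lose at least `1 / |V|²` of distance, which costs
`λ / |V|² > |V|` in the objective, while the densities can exceed `(|V| - 3) / 2` by at most
`|V|`. Hence the three sets are disjoint, so their densities sum to at most `(|V| - 3) / 2`. As this
bound is attained, the sets cover `V` and each of them is a clique.
-/

section Density

variable {V : Type*} (G : SimpleGraph V) (U : Finset V)

lemma edges_within_subset_image_offDiag [DecidableEq V] :
    {e : Sym2 V | e ∈ G.edgeSet ∧ ∀ v ∈ e, v ∈ U} ⊆ (U.offDiag.image Sym2.mk.uncurry : Set _) := by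
  intro e ⟨he, hU⟩
  induction e using Sym2.ind with
  | _ a b =>
    have hab : (a, b) ∈ U.offDiag := mem_offDiag.2
      ⟨hU a (Sym2.mem_mk_left a b), hU b (Sym2.mem_mk_right a b), G.ne_of_adj he⟩
    exact mem_image_of_mem Sym2.mk.uncurry hab

lemma ncard_image_offDiag [DecidableEq V] :
    Set.ncard (U.offDiag.image Sym2.mk.uncurry : Set (Sym2 V)) = U.card.choose 2 := by
  rw [Set.ncard_coe_finset, Sym2.card_image_offDiag]

lemma edgeCount_le_choose_two : edgeCount G U ≤ U.card.choose 2 := by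
  classical
  rw [← ncard_image_offDiag]
  exact Set.ncard_le_ncard (edges_within_subset_image_offDiag G U) (finite_toSet _)

variable {G U}

lemma isClique_of_choose_two_le_edgeCount (h : U.card.choose 2 ≤ edgeCount G U) :
    G.IsClique (U : Set V) := by
  classical
  rw [← ncard_image_offDiag] at h
  have edges_eq := Set.eq_of_subset_of_ncard_le (edges_within_subset_image_offDiag G U) h
    (finite_toSet _)
  intro a ha b hb hab
  have hmem : s(a, b) ∈ (U.offDiag.image Sym2.mk.uncurry : Set (Sym2 V)) :=
    mem_image_of_mem _ (mem_offDiag.2 ⟨ha, hb, hab⟩)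
  rw [← edges_eq] at hmem
  exact hmem.1

variable (G) in
lemma dens_le_card_sub_one_div_two (hU : U.Nonempty) : dens G U ≤ ((U.card : ℝ) - 1) / 2 := by
  have card_pos : (0 : ℝ) < U.card := mod_cast hU.card_pos
  have h : (edgeCount G U : ℝ) ≤ U.card.choose 2 := mod_cast edgeCount_le_choose_two G U
  rw [Nat.cast_choose_two] at h
  rw [_root_.dens, div_le_iff₀ card_pos]
  linarith

variable (G) in
lemma dens_le_card_univ_sub_one_div_two [Fintype V] (hU : U.Nonempty) :
    dens G U ≤ ((Fintype.card V : ℝ) - 1) / 2 := by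
  refine (dens_le_card_sub_one_div_two G hU).trans ?_
  gcongr
  exact card_le_univ U

lemma isClique_of_card_sub_one_div_two_le_dens (hU : U.Nonempty)
    (h : ((U.card : ℝ) - 1) / 2 ≤ dens G U) : G.IsClique (U : Set V) := by
  have card_pos : (0 : ℝ) < U.card := mod_cast hU.card_pos
  rw [_root_.dens, le_div_iff₀ card_pos] at h
  apply isClique_of_choose_two_le_edgeCount
  rw [← Nat.cast_le (α := ℝ), Nat.cast_choose_two]
  linarith

end Density

section Distance

variable {α : Type*} [DecidableEq α] {U Z : Finset α}

variable (U Z) in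
lemma ddist_le_two : ddist U Z ≤ 2 := by
  unfold ddist
  split_ifs
  · exact zero_le_two
  · exact sub_le_self _ (by positivity)

lemma ddist_le_two_sub_of_not_disjoint (h : ¬Disjoint U Z) :
    ddist U Z ≤ 2 - 1 / ((U.card : ℝ) * Z.card) := by
  have inter_nonempty : (U ∩ Z).Nonempty := not_disjoint_iff_nonempty_inter.1 h
  have one_le_inter : (1 : ℝ) ≤ (U ∩ Z).card := mod_cast inter_nonempty.card_pos
  have one_le_mul : (1 : ℝ) ≤ (U.card : ℝ) * Z.card := mod_cast
    Nat.mul_pos (inter_nonempty.mono inter_subset_left).card_pos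
      (inter_nonempty.mono inter_subset_right).card_pos
  unfold ddist
  split_ifs
  · linarith [div_le_one_of_le₀ one_le_mul (by positivity)]
  · gcongr
    exact one_le_pow₀ one_le_inter

variable [Fintype α]

lemma ddist_le_two_sub_one_div_card_univ_sq (h : ¬Disjoint U Z) :
    ddist U Z ≤ 2 - 1 / (Fintype.card α : ℝ) ^ 2 := by
  obtain ⟨a, haU, haZ⟩ := not_disjoint_iff.1 h
  have U_pos : (0 : ℝ) < U.card := mod_cast card_pos.2 ⟨a, haU⟩
  have Z_pos : (0 : ℝ) < Z.card := mod_cast card_pos.2 ⟨a, haZ⟩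
  refine (ddist_le_two_sub_of_not_disjoint h).trans ?_
  rw [sq]
  gcongr <;> exact card_le_univ _

lemma sum_ddist_le_six_sub_of_not_disjoint {W₁ W₂ W₃ : Finset α}
    (h : ¬(Disjoint W₁ W₂ ∧ Disjoint W₁ W₃ ∧ Disjoint W₂ W₃)) :
    ddist W₁ W₂ + ddist W₁ W₃ + ddist W₂ W₃ ≤ 6 - 1 / (Fintype.card α : ℝ) ^ 2 := by
  have h₁₂ := ddist_le_two W₁ W₂
  have h₁₃ := ddist_le_two W₁ W₃
  have h₂₃ := ddist_le_two W₂ W₃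
  simp only [not_and_or] at h
  rcases h with h | h | h <;> linarith [ddist_le_two_sub_one_div_card_univ_sq h]

end Distance

section Objective

variable {V : Type*} [DecidableEq V] {G : SimpleGraph V} {lam : ℝ} {W₁ W₂ W₃ : Finset V}

variable (G W₁ W₂ W₃) in
lemma rval3_le_sum_dens_add (hlam : 0 ≤ lam) :
    rval3 G lam W₁ W₂ W₃ ≤ dens G W₁ + dens G W₂ + dens G W₃ + 6 * lam := by
  have distances_le : ddist W₁ W₂ + ddist W₁ W₃ + ddist W₂ W₃ ≤ 6 := by
    linarith [ddist_le_two W₁ W₂, ddist_le_two W₁ W₃, ddist_le_two W₂ W₃]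
  rw [rval3, mul_comm 6]
  gcongr

variable [Fintype V]

lemma rval3_lt_of_not_disjoint (hlam : (Fintype.card V : ℝ) ^ 3 < lam)
    (h₁ : W₁.Nonempty) (h₂ : W₂.Nonempty) (h₃ : W₃.Nonempty)
    (h : ¬(Disjoint W₁ W₂ ∧ Disjoint W₁ W₃ ∧ Disjoint W₂ W₃)) :
    rval3 G lam W₁ W₂ W₃ < ((Fintype.card V : ℝ) - 3) / 2 + 6 * lam := by
  have card_pos : (0 : ℝ) < Fintype.card V := mod_cast h₁.card_pos.trans_le (card_le_univ W₁)
  have lam_pos : 0 < lam := (pow_pos card_pos 3).trans hlam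
  set n : ℝ := (Fintype.card V : ℝ)
  have penalty : n < lam / n ^ 2 := by
    rw [lt_div_iff₀ (pow_pos card_pos 2)]
    linarith
  have distances_le := sum_ddist_le_six_sub_of_not_disjoint h
  calc rval3 G lam W₁ W₂ W₃
      ≤ (n - 1) / 2 + (n - 1) / 2 + (n - 1) / 2 + lam * (6 - 1 / n ^ 2) := by
        unfold rval3
        gcongr <;> exact dens_le_card_univ_sub_one_div_two G ‹_›
    _ = (n - 3) / 2 + 6 * lam + (n - lam / n ^ 2) := by ring
    _ < (n - 3) / 2 + 6 * lam := by linarith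

theorem stmt_16_general (hlam : (Fintype.card V : ℝ) ^ 3 < lam)
    (h₁ : W₁.Nonempty) (h₂ : W₂.Nonempty) (h₃ : W₃.Nonempty)
    (hr : ((Fintype.card V : ℝ) - 3) / 2 + 6 * lam ≤ rval3 G lam W₁ W₂ W₃) :
    (Disjoint W₁ W₂ ∧ Disjoint W₁ W₃ ∧ Disjoint W₂ W₃) ∧
    W₁ ∪ W₂ ∪ W₃ = univ ∧
    (G.IsClique (W₁ : Set V) ∧ G.IsClique (W₂ : Set V) ∧ G.IsClique (W₃ : Set V)) := by
  obtain ⟨disj₁₂, disj₁₃, disj₂₃⟩ : Disjoint W₁ W₂ ∧ Disjoint W₁ W₃ ∧ Disjoint W₂ W₃ := by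
    by_contra h
    exact (rval3_lt_of_not_disjoint hlam h₁ h₂ h₃ h).not_ge hr
  have card_union : (W₁ ∪ W₂ ∪ W₃).card = W₁.card + W₂.card + W₃.card := by
    rw [card_union_of_disjoint (disjoint_union_left.2 ⟨disj₁₃, disj₂₃⟩),
      card_union_of_disjoint disj₁₂]
  have card_le : (W₁.card + W₂.card + W₃.card : ℝ) ≤ Fintype.card V :=
    mod_cast card_union ▸ card_le_univ (W₁ ∪ W₂ ∪ W₃)
  have lam_nonneg : 0 ≤ lam := (pow_nonneg (Nat.cast_nonneg _) 3).trans hlam.le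
  have le_sum_dens := hr.trans (rval3_le_sum_dens_add G W₁ W₂ W₃ lam_nonneg)
  have dens₁ := dens_le_card_sub_one_div_two G h₁
  have dens₂ := dens_le_card_sub_one_div_two G h₂
  have dens₃ := dens_le_card_sub_one_div_two G h₃
  have card_eq : (W₁.card + W₂.card + W₃.card : ℝ) = Fintype.card V := by linarith
  refine ⟨⟨disj₁₂, disj₁₃, disj₂₃⟩, ?_, ?_, ?_, ?_⟩
  · exact (card_eq_iff_eq_univ _).1 (card_union.trans (mod_cast card_eq))
  all_goals exact isClique_of_card_sub_one_div_two_le_dens ‹_› (by linarith)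

end Objective

/-- Lemma 16 of the paper. -/
theorem stmt_16 {V : Type*} [Fintype V] [DecidableEq V] [Nonempty V]
    (G : SimpleGraph V) (V₁ V₂ V₃ : Finset V)
    (h1 : V₁.Nonempty) (h2 : V₂.Nonempty) (h3 : V₃.Nonempty)
    (hr : rval3 G (3 * (Fintype.card V : ℝ) ^ 3) V₁ V₂ V₃ ≥
      ((Fintype.card V : ℝ) - 3) / 2 + 18 * (Fintype.card V : ℝ) ^ 3) :
    (Disjoint V₁ V₂ ∧ Disjoint V₁ V₃ ∧ Disjoint V₂ V₃) ∧
    V₁ ∪ V₂ ∪ V₃ = Finset.univ ∧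
    (G.IsClique (V₁ : Set V) ∧ G.IsClique (V₂ : Set V) ∧ G.IsClique (V₃ : Set V)) := by
  have card_pos : (0 : ℝ) < Fintype.card V := mod_cast Fintype.card_pos
  exact stmt_16_general (lam := 3 * (Fintype.card V : ℝ) ^ 3) (by linarith [pow_pos card_pos 3])
    h1 h2 h3 (by linarith)
end
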